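/- (Theorem 1, inner worst-case expectation) Let v ∈ ℝⁿ, t ∈ ℝ, ε ≥ 0 and let ξ̂¹,…,ξ̂ᴺ ∈ ℝⁿ (N ≥ 1) with empirical distribution F_N. Then the supremum of ∫ h(v,t,ξ) dμ(ξ) over all Borel probability measures μ on ℝⁿ with finite first moment satisfying d_W(F_N, μ) ≤ ε equals the optimal value of the linear program minimizing (1/N)·Σ_{i=1}^N s_i + λ·ε over (s,λ) ∈ ℝᴺ × ℝ subject to ⟨v,ξ̂ⁱ⟩ − t ≤ s_i, s_i ≥ 0 for all i, and ‖v‖_q ≤ λ; that is, it equals (1/N)·Σ_{i=1}^N max(⟨v,ξ̂ⁱ⟩ − t, 0) + ε·‖v‖_q. -/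

import Mathlib

open MeasureTheory Filter Topology
open scoped ENNReal BigOperators

/-- The ℓp norm on ℝⁿ, for `p ∈ [1,∞]` (an extended nonnegative real). -/
noncomputable def lpNorm {n : ℕ} (p : ℝ≥0∞) (x : Fin n → ℝ) : ℝ :=
  if p = ∞ then ⨆ i, |x i| else (∑ i, |x i| ^ p.toReal) ^ (1 / p.toReal)

/-- The Euclidean inner product on ℝⁿ. -/
def ip {n : ℕ} (w x : Fin n → ℝ) : ℝ := ∑ i, w i * x i


/-- `h(v,t,ξ) = max(⟨ξ,v⟩ − t, 0)`. -/
noncomputable def hfun {n : ℕ} (v : Fin n → ℝ) (t : ℝ) (ξ : Fin n → ℝ) : ℝ :=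
  max (ip ξ v - t) 0

/-- The empirical distribution `(1/N)·Σᵢ δ_{ξⁱ}` of `N` samples. -/
noncomputable def empirical {n : ℕ} (N : ℕ) (ξ : Fin N → Fin n → ℝ) :
    MeasureTheory.Measure (Fin n → ℝ) :=
  (N : ℝ≥0∞)⁻¹ • ∑ i, MeasureTheory.Measure.dirac (ξ i)

/-- The Wasserstein distance (valued in `ℝ≥0∞`) between two Borel probability measures
on ℝⁿ, with ground metric `‖·‖_p`: the infimum over couplings `K` (probability measures on
ℝⁿ × ℝⁿ with the prescribed marginals) of `∫ ‖x − y‖_p dK(x,y)`. -/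
noncomputable def dW {n : ℕ} (p : ℝ≥0∞) (μ ν : MeasureTheory.Measure (Fin n → ℝ)) : ℝ≥0∞ :=
  ⨅ (K : MeasureTheory.Measure ((Fin n → ℝ) × (Fin n → ℝ)))
    (_ : MeasureTheory.IsProbabilityMeasure K)
    (_ : K.map Prod.fst = μ) (_ : K.map Prod.snd = ν),
    ∫⁻ z, ENNReal.ofReal (lpNorm p (z.1 - z.2)) ∂K

/-!
By Hölder's inequality `hfun v t` is `‖v‖_q`-Lipschitz for `‖·‖_p`, so a coupling of cost `c`
changes its expectation by at most `‖v‖_q * c`; this is the upper bound. For the lower bound choose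
`u` with `‖u‖_p ≤ 1` and `⟨u, v⟩ = ‖v‖_q`, and move a fraction `b` of the mass by `(ε / b) • u`.
This costs at most `ε` and raises the expectation by at least `ε * ‖v‖_q - b * D`, where `D` is the
expected negative part of `⟨x, v⟩ - t`. The supremum is approached as `b → 0`, where the moved mass
escapes to infinity, so it need not be attained.
-/

open scoped NNReal

section LpDuality

variable {n : ℕ} {p q : ℝ≥0∞}

lemma lpNorm_eq_norm_toLp [hp : Fact (1 ≤ p)] (x : Fin n → ℝ) :
    lpNorm p x = ‖WithLp.toLp p x‖ := by
  unfold _root_.lpNorm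
  split_ifs with h
  · subst h
    rfl
  · have hp_pos : 0 < p.toReal := ENNReal.toReal_pos (one_pos.trans_le hp.out).ne' h
    exact (PiLp.norm_eq_sum hp_pos (WithLp.toLp p x)).symm

lemma continuous_lpNorm [Fact (1 ≤ p)] : Continuous fun x : Fin n → ℝ => lpNorm p x := by
  simp_rw [lpNorm_eq_norm_toLp]
  exact (PiLp.continuous_toLp p fun _ : Fin n => ℝ).norm

lemma integrable_lpNorm_iff [Fact (1 ≤ p)] {μ : Measure (Fin n → ℝ)} :
    Integrable (fun x => lpNorm p x) μ ↔ Integrable (fun x => x) μ := by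
  simp_rw [lpNorm_eq_norm_toLp]
  rw [integrable_norm_iff (PiLp.continuous_toLp p _).aestronglyMeasurable]
  exact (PiLp.continuousLinearEquiv p ℝ fun _ : Fin n => ℝ).symm.integrable_comp_iff

lemma ip_eq_dotProduct (w x : Fin n → ℝ) : ip w x = w ⬝ᵥ x := rfl

lemma ip_le_lpNorm_top_mul_lpNorm_one (w x : Fin n → ℝ) : ip w x ≤ lpNorm ∞ w * lpNorm 1 x := by
  simp only [lpNorm_eq_norm_toLp, PiLp.norm_eq_of_L1, Finset.mul_sum]
  refine Finset.sum_le_sum fun i _ => (le_abs_self _).trans ?_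
  rw [abs_mul]
  exact mul_le_mul_of_nonneg_right (PiLp.norm_apply_le (WithLp.toLp ∞ w) i) (abs_nonneg _)

lemma ip_le_lpNorm_mul_lpNorm [p.HolderConjugate q] (w x : Fin n → ℝ) :
    ip w x ≤ lpNorm p w * lpNorm q x := by
  by_cases hp : p = ∞
  · obtain rfl := (ENNReal.HolderConjugate.eq_top_iff_eq_one p q).1 hp
    subst hp
    exact ip_le_lpNorm_top_mul_lpNorm_one w x
  by_cases hq : q = ∞
  · obtain rfl := (ENNReal.HolderConjugate.eq_top_iff_eq_one q p).1 hq
    subst hq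
    rw [ip_eq_dotProduct, dotProduct_comm, mul_comm]
    exact ip_le_lpNorm_top_mul_lpNorm_one x w
  · simp only [_root_.lpNorm, if_neg hp, if_neg hq]
    exact Real.inner_le_Lp_mul_Lq _ _ _ (ENNReal.HolderConjugate.toReal_of_ne_top hp hq)

lemma abs_sign_le_one (a : ℝ) : |(SignType.sign a : ℝ)| ≤ 1 := by
  rcases lt_trichotomy a 0 with h | h | h <;> simp [h]

lemma exists_lpNorm_one_le_one_ip_eq (v : Fin n → ℝ) :
    ∃ u : Fin n → ℝ, lpNorm 1 u ≤ 1 ∧ ip u v = lpNorm ∞ v := by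
  simp only [lpNorm_eq_norm_toLp, PiLp.norm_eq_ciSup]
  cases isEmpty_or_nonempty (Fin n)
  · exact ⟨0, by simp, by simp [ip]⟩
  obtain ⟨j, hj⟩ := exists_eq_ciSup_of_finite (f := fun i => ‖v i‖)
  refine ⟨Pi.single j (SignType.sign (v j) : ℝ), ?_, ?_⟩
  · rw [PiLp.toLp_single, PiLp.norm_single]
    exact abs_sign_le_one _
  · rw [ip_eq_dotProduct, single_dotProduct, sign_mul_self]
    exact hj

lemma exists_lpNorm_top_le_one_ip_eq (v : Fin n → ℝ) :
    ∃ u : Fin n → ℝ, lpNorm ∞ u ≤ 1 ∧ ip u v = lpNorm 1 v := by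
  simp only [lpNorm_eq_norm_toLp, PiLp.norm_eq_ciSup, PiLp.norm_eq_of_L1]
  exact ⟨fun i => SignType.sign (v i), Real.iSup_le (fun i => abs_sign_le_one _) zero_le_one,
    Finset.sum_congr rfl fun i _ => sign_mul_self _⟩

lemma exists_lpNorm_le_one_ip_eq_of_ne_top [p.HolderConjugate q] (hp : p ≠ ∞) (hq : q ≠ ∞)
    (v : Fin n → ℝ) : ∃ u : Fin n → ℝ, lpNorm p u ≤ 1 ∧ ip u v = lpNorm q v := by
  have hqp := ENNReal.HolderConjugate.toReal_of_ne_top hq hp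
  obtain ⟨g, hg, hgv⟩ := (NNReal.isGreatest_Lp Finset.univ (fun i => Real.nnabs (v i)) hqp).1
  simp only [_root_.lpNorm, if_neg hp, if_neg hq]
  refine ⟨fun i => (SignType.sign (v i) : ℝ) * g i, ?_, ?_⟩
  · refine Real.rpow_le_one (by positivity) ?_ (by positivity)
    calc ∑ i, |(SignType.sign (v i) : ℝ) * g i| ^ p.toReal
        ≤ ∑ i, (g i : ℝ) ^ p.toReal := by
          gcongr with i
          rw [abs_mul, NNReal.abs_eq]
          exact mul_le_of_le_one_left (g i).2 (abs_sign_le_one _)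
      _ ≤ 1 := by exact_mod_cast hg
  · calc ∑ i, (SignType.sign (v i) : ℝ) * g i * v i = ∑ i, |v i| * g i := by
          simp only [← sign_mul_self, mul_right_comm]
      _ = (∑ i, |v i| ^ q.toReal) ^ (1 / q.toReal) := by
          simpa using congrArg NNReal.toReal hgv

lemma exists_lpNorm_le_one_ip_eq [p.HolderConjugate q] (v : Fin n → ℝ) :
    ∃ u : Fin n → ℝ, lpNorm p u ≤ 1 ∧ ip u v = lpNorm q v := by
  by_cases hp : p = ∞
  · obtain rfl := (ENNReal.HolderConjugate.eq_top_iff_eq_one p q).1 hp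
    subst hp
    exact exists_lpNorm_top_le_one_ip_eq v
  by_cases hq : q = ∞
  · obtain rfl := (ENNReal.HolderConjugate.eq_top_iff_eq_one q p).1 hq
    subst hq
    exact exists_lpNorm_one_le_one_ip_eq v
  · exact exists_lpNorm_le_one_ip_eq_of_ne_top hp hq v

end LpDuality

section Hfun

variable {n : ℕ} {p q : ℝ≥0∞} (v : Fin n → ℝ) (t : ℝ)

lemma hfun_le_add_lpNorm_mul [p.HolderConjugate q] (x y : Fin n → ℝ) :
    hfun v t y ≤ hfun v t x + lpNorm q v * lpNorm p (x - y) := by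
  have : Fact (1 ≤ p) := ⟨ENNReal.HolderConjugate.one_le p q⟩
  have : Fact (1 ≤ q) := ⟨ENNReal.HolderConjugate.one_le q p⟩
  have hip : ip y v - ip x v ≤ lpNorm q v * lpNorm p (x - y) := by
    rw [lpNorm_eq_norm_toLp (p := p), WithLp.toLp_sub, norm_sub_rev, ← WithLp.toLp_sub,
      ← lpNorm_eq_norm_toLp, ip_eq_dotProduct, ip_eq_dotProduct, ← sub_dotProduct,
      dotProduct_comm]
    exact ip_le_lpNorm_mul_lpNorm v (y - x)
  have hnonneg : 0 ≤ lpNorm q v * lpNorm p (x - y) := by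
    simp only [lpNorm_eq_norm_toLp]
    positivity
  refine max_le ?_ (add_nonneg (le_max_right _ _) hnonneg)
  linarith [show ip x v - t ≤ hfun v t x from le_max_left _ _]

lemma hfun_sub_hfun_neg (x : Fin n → ℝ) : hfun v t x - hfun (-v) (-t) x = ip x v - t := by
  have h : ip x (-v) - -t = -(ip x v - t) := by
    simp only [ip_eq_dotProduct, dotProduct_neg]
    ring
  rw [hfun, hfun, h, max_zero_sub_max_neg_zero_eq_self]

lemma hfun_add_ip_sub_le (x w : Fin n → ℝ) :
    hfun v t x + ip w v - hfun (-v) (-t) x ≤ hfun v t (x + w) := by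
  have hle : ip (x + w) v - t ≤ hfun v t (x + w) := le_max_left _ _
  rw [ip_eq_dotProduct, add_dotProduct] at hle
  have hsub := hfun_sub_hfun_neg v t x
  simp only [ip_eq_dotProduct] at hsub ⊢
  linarith

lemma integrable_hfun {μ : Measure (Fin n → ℝ)} [IsFiniteMeasure μ]
    (hμ : Integrable (fun x => x) μ) : Integrable (hfun v t) μ := by
  have hip : Integrable (fun x => ip x v) μ :=
    integrable_finsetSum _ fun i _ => (hμ.eval i).mul_const (v i)
  exact (hip.sub (integrable_const t)).pos_part

end Hfun

section ShiftMixture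

variable {E E' : Type*} [MeasurableSpace E] [MeasurableSpace E']

/-- The distribution `F` with a fraction `b` of its mass moved by `w` and the fraction `a` left in
place (meaningful for `a + b = 1`). For small `b` and large `w` these are the near-optimal measures
of the worst-case expectation. The weights are in `ℝ≥0` so that they scale both measures and real
integrals. -/
noncomputable def shiftMixture [Add E] (F : Measure E) (a b : ℝ≥0) (w : E) : Measure E :=
  a • F + b • F.map (· + w)

lemma shiftMixture_zero [AddMonoid E] (F : Measure E) {a b : ℝ≥0} (hab : a + b = 1) :
    shiftMixture F a b 0 = F := by
  simp [shiftMixture, ← add_smul, hab]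

lemma isProbabilityMeasure_shiftMixture [Add E] [MeasurableAdd E] (F : Measure E)
    [IsProbabilityMeasure F] {a b : ℝ≥0} (hab : a + b = 1) (w : E) :
    IsProbabilityMeasure (shiftMixture F a b w) := by
  have := Measure.isProbabilityMeasure_map (μ := F) (measurable_add_const w).aemeasurable
  constructor
  simp [shiftMixture, ← ENNReal.coe_add, hab]

lemma map_shiftMixture [AddMonoid E] [MeasurableAdd E] [AddMonoid E'] [MeasurableAdd E']
    (F : Measure E) (a b : ℝ≥0) (w : E) (φ : E →+ E') (hφ : Measurable φ) :
    (shiftMixture F a b w).map φ = shiftMixture (F.map φ) a b (φ w) := by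
  have hcomp : φ ∘ (· + w) = (· + φ w) ∘ φ := funext fun x => map_add φ x w
  simp only [shiftMixture, Measure.map_add _ _ hφ, Measure.map_smul,
    Measure.map_map hφ (measurable_add_const w), Measure.map_map (measurable_add_const _) hφ, hcomp]

lemma lintegral_shiftMixture [Add E] [MeasurableAdd E] (F : Measure E) (a b : ℝ≥0) (w : E)
    {f : E → ℝ≥0∞} (hf : Measurable f) :
    ∫⁻ x, f x ∂shiftMixture F a b w = a * ∫⁻ x, f x ∂F + b * ∫⁻ x, f (x + w) ∂F := by
  rw [shiftMixture, lintegral_add_measure, lintegral_smul_measure, lintegral_smul_measure,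
    lintegral_map hf (measurable_add_const w)]
  rfl

variable {G : Type*} [NormedAddCommGroup G]

lemma integrable_shiftMixture [AddGroup E] [MeasurableAdd E] {F : Measure E} {a b : ℝ≥0} {w : E}
    {f : E → G} (hf : Integrable f F) (hfw : Integrable (fun x => f (x + w)) F) :
    Integrable f (shiftMixture F a b w) :=
  hf.smul_measure_nnreal.add_measure
    ((measurableEmbedding_addRight w).integrable_map_iff.2 hfw).smul_measure_nnreal

lemma integral_shiftMixture [NormedSpace ℝ G] [AddGroup E] [MeasurableAdd E] {F : Measure E}
    {a b : ℝ≥0} {w : E} {f : E → G} (hf : Integrable f F)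
    (hfw : Integrable (fun x => f (x + w)) F) :
    ∫ x, f x ∂shiftMixture F a b w = a • ∫ x, f x ∂F + b • ∫ x, f (x + w) ∂F := by
  have hadd : MeasurableEmbedding (· + w) := measurableEmbedding_addRight w
  rw [shiftMixture, integral_add_measure hf.smul_measure_nnreal
    (hadd.integrable_map_iff.2 hfw).smul_measure_nnreal, integral_smul_nnreal_measure,
    integral_smul_nnreal_measure, hadd.integral_map]

end ShiftMixture

section Wasserstein

variable {n : ℕ} {p q : ℝ≥0∞}

lemma dW_shiftMixture_le [Fact (1 ≤ p)] (F : Measure (Fin n → ℝ)) [IsProbabilityMeasure F]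
    {a b : ℝ≥0} (hab : a + b = 1) (w : Fin n → ℝ) :
    dW p F (shiftMixture F a b w) ≤ b * ENNReal.ofReal (lpNorm p w) := by
  have hdiag : Measurable fun x : Fin n → ℝ => (x, x) := by fun_prop
  have hd : Measurable fun z : (Fin n → ℝ) × (Fin n → ℝ) => ENNReal.ofReal (lpNorm p (z.1 - z.2)) :=
    (continuous_lpNorm.measurable.comp (measurable_fst.sub measurable_snd)).ennreal_ofReal
  let D := F.map fun x => (x, x)
  have : IsProbabilityMeasure D := Measure.isProbabilityMeasure_map hdiag.aemeasurable
  have hfst : D.map Prod.fst = F :=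
    (Measure.map_map measurable_fst hdiag).trans Measure.map_id
  have hsnd : D.map Prod.snd = F :=
    (Measure.map_map measurable_snd hdiag).trans Measure.map_id
  have hKfst : (shiftMixture D a b (0, w)).map Prod.fst = F := by
    have h := map_shiftMixture D a b (0, w) (AddMonoidHom.fst _ _) measurable_fst
    simpa [hfst, shiftMixture_zero F hab] using h
  have hKsnd : (shiftMixture D a b (0, w)).map Prod.snd = shiftMixture F a b w := by
    have h := map_shiftMixture D a b (0, w) (AddMonoidHom.snd _ _) measurable_snd
    simpa [hsnd] using h
  have hcost : ∫⁻ z, ENNReal.ofReal (lpNorm p (z.1 - z.2)) ∂shiftMixture D a b (0, w) =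
      b * ENNReal.ofReal (lpNorm p w) := by
    have hdw : Measurable fun z : (Fin n → ℝ) × (Fin n → ℝ) =>
        ENNReal.ofReal (lpNorm p ((z + (0, w)).1 - (z + (0, w)).2)) :=
      hd.comp (measurable_add_const _)
    rw [lintegral_shiftMixture _ _ _ _ hd, lintegral_map hd hdiag, lintegral_map hdw hdiag]
    simp [lpNorm_eq_norm_toLp]
  exact iInf_le_of_le _ <| iInf_le_of_le (isProbabilityMeasure_shiftMixture D hab _) <|
    iInf_le_of_le hKfst <| iInf_le_of_le hKsnd hcost.le

lemma integral_le_integral_add_integral_of_coupling {α β : Type*} [MeasurableSpace α]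
    [MeasurableSpace β] {μ : Measure α} {ν : Measure β} {K : Measure (α × β)}
    (hfst : K.map Prod.fst = μ) (hsnd : K.map Prod.snd = ν) {f : α → ℝ} {g : β → ℝ}
    {c : α × β → ℝ} (hgfc : ∀ z, g z.2 ≤ f z.1 + c z) (hf : Integrable f μ) (hg : Integrable g ν)
    (hc : Integrable c K) :
    ∫ y, g y ∂ν ≤ ∫ x, f x ∂μ + ∫ z, c z ∂K := by
  subst hfst hsnd
  have hf_fst : Integrable (fun z => f z.1) K := hf.comp_measurable measurable_fst
  have hg_snd : Integrable (fun z => g z.2) K := hg.comp_measurable measurable_snd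
  calc ∫ y, g y ∂K.map Prod.snd
      = ∫ z, g z.2 ∂K := integral_map measurable_snd.aemeasurable hg.1
    _ ≤ ∫ z, f z.1 + c z ∂K := integral_mono hg_snd (hf_fst.add hc) hgfc
    _ = ∫ z, f z.1 ∂K + ∫ z, c z ∂K := integral_add hf_fst hc
    _ = ∫ x, f x ∂K.map Prod.fst + ∫ z, c z ∂K := by
        rw [integral_map measurable_fst.aemeasurable hf.1]

lemma exists_coupling_of_dW_lt [Fact (1 ≤ p)] {F μ : Measure (Fin n → ℝ)} {c : ℝ}
    (h : dW p F μ < ENNReal.ofReal c) :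
    ∃ K : Measure ((Fin n → ℝ) × (Fin n → ℝ)), K.map Prod.fst = F ∧ K.map Prod.snd = μ ∧
      Integrable (fun z => lpNorm p (z.1 - z.2)) K ∧ ∫ z, lpNorm p (z.1 - z.2) ∂K ≤ c := by
  simp only [dW, iInf_lt_iff] at h
  obtain ⟨K, _, hfst, hsnd, hcost⟩ := h
  have hc : 0 < c := ENNReal.ofReal_pos.1 (hcost.trans_le' zero_le)
  have hnonneg : 0 ≤ᵐ[K] fun z => lpNorm p (z.1 - z.2) := ae_of_all _ fun z => by
    simp only [lpNorm_eq_norm_toLp, Pi.zero_apply, norm_nonneg]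
  have hmeas : AEStronglyMeasurable (fun z => lpNorm p (z.1 - z.2)) K :=
    (continuous_lpNorm.comp (continuous_fst.sub continuous_snd)).aestronglyMeasurable
  refine ⟨K, hfst, hsnd,
    ⟨hmeas, (hasFiniteIntegral_iff_ofReal hnonneg).2 (hcost.trans ENNReal.ofReal_lt_top)⟩, ?_⟩
  rw [integral_eq_lintegral_of_nonneg_ae hnonneg hmeas]
  exact ENNReal.toReal_le_of_le_ofReal hc.le hcost.le

lemma integral_le_add_mul_of_dW_le [Fact (1 ≤ p)] {F μ : Measure (Fin n → ℝ)}
    {f : (Fin n → ℝ) → ℝ} {L ε : ℝ} (hL : 0 ≤ L) (hε : 0 ≤ ε)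
    (hf : ∀ x y, f y ≤ f x + L * lpNorm p (x - y)) (hfF : Integrable f F) (hfμ : Integrable f μ)
    (hdW : dW p F μ ≤ ENNReal.ofReal ε) :
    ∫ x, f x ∂μ ≤ ∫ x, f x ∂F + L * ε := by
  have hgt : ∀ c > ε, ∫ x, f x ∂μ ≤ ∫ x, f x ∂F + L * c := fun c hc => by
    obtain ⟨K, hfst, hsnd, hK, hKc⟩ := exists_coupling_of_dW_lt <|
      hdW.trans_lt ((ENNReal.ofReal_lt_ofReal_iff (hε.trans_lt hc)).2 hc)
    calc ∫ x, f x ∂μ ≤ ∫ x, f x ∂F + ∫ z, L * lpNorm p (z.1 - z.2) ∂K :=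
          integral_le_integral_add_integral_of_coupling hfst hsnd (fun z => hf z.1 z.2) hfF hfμ
            (hK.const_mul L)
      _ = ∫ x, f x ∂F + L * ∫ z, lpNorm p (z.1 - z.2) ∂K := by rw [integral_const_mul]
      _ ≤ ∫ x, f x ∂F + L * c := by gcongr
  have hlim : Tendsto (fun c => ∫ x, f x ∂F + L * c) (𝓝[>] ε) (𝓝 (∫ x, f x ∂F + L * ε)) :=
    (by fun_prop : Continuous fun c => ∫ x, f x ∂F + L * c).continuousWithinAt
  exact ge_of_tendsto hlim (eventually_nhdsWithin_of_forall hgt)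

end Wasserstein

section WorstCase

variable {n : ℕ} {p q : ℝ≥0∞}

/-- The probability measures with finite first moment within Wasserstein distance `ε` of the
nominal distribution `F`: the ambiguity set of the worst-case expectation. -/
def wassersteinBall (p : ℝ≥0∞) (F : Measure (Fin n → ℝ)) (ε : ℝ) : Set (Measure (Fin n → ℝ)) :=
  {μ | IsProbabilityMeasure μ ∧ Integrable (fun x => lpNorm p x) μ ∧ dW p F μ ≤ ENNReal.ofReal ε}

variable {F : Measure (Fin n → ℝ)} [IsProbabilityMeasure F]

lemma shiftMixture_mem_wassersteinBall [Fact (1 ≤ p)] (hF : Integrable (fun x => x) F)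
    {a b : ℝ≥0} (hab : a + b = 1) {w : Fin n → ℝ} {ε : ℝ} (hw : b * lpNorm p w ≤ ε) :
    shiftMixture F a b w ∈ wassersteinBall p F ε := by
  refine ⟨isProbabilityMeasure_shiftMixture F hab w, integrable_lpNorm_iff.2 <|
    integrable_shiftMixture hF (hF.add (integrable_const w)), ?_⟩
  calc dW p F (shiftMixture F a b w) ≤ b * ENNReal.ofReal (lpNorm p w) :=
        dW_shiftMixture_le F hab w
    _ = ENNReal.ofReal (b * lpNorm p w) := by
        rw [ENNReal.ofReal_mul b.coe_nonneg, ENNReal.ofReal_coe_nnreal]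
    _ ≤ ENNReal.ofReal ε := ENNReal.ofReal_le_ofReal hw

variable (v : Fin n → ℝ) (t : ℝ)

lemma le_integral_hfun_shiftMixture (hF : Integrable (fun x => x) F) {a b : ℝ≥0}
    (hab : a + b = 1) (w : Fin n → ℝ) :
    ∫ x, hfun v t x ∂F + b * ip w v - b * ∫ x, hfun (-v) (-t) x ∂F ≤
      ∫ x, hfun v t x ∂shiftMixture F a b w := by
  have hpos := integrable_hfun v t hF
  have hpos_add : Integrable (fun x => hfun v t x + ip w v) F := hpos.add (integrable_const _)
  have hneg := integrable_hfun (-v) (-t) hF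
  have hpos_shift : Integrable (fun x => hfun v t (x + w)) F := by
    have hFw : Integrable (fun x => x) (F.map (· + w)) :=
      (integrable_map_measure measurable_id.aestronglyMeasurable
        (measurable_add_const w).aemeasurable).2 (hF.add (integrable_const w))
    exact (integrable_hfun v t hFw).comp_measurable (measurable_add_const w)
  have hshift : ∫ x, hfun v t x ∂F + ip w v - ∫ x, hfun (-v) (-t) x ∂F ≤
      ∫ x, hfun v t (x + w) ∂F := by
    calc ∫ x, hfun v t x ∂F + ip w v - ∫ x, hfun (-v) (-t) x ∂F
        = ∫ x, hfun v t x + ip w v - hfun (-v) (-t) x ∂F := by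
          rw [integral_sub hpos_add hneg,
            integral_add hpos (integrable_const _), integral_const, probReal_univ, one_smul]
      _ ≤ ∫ x, hfun v t (x + w) ∂F :=
          integral_mono (hpos_add.sub hneg) hpos_shift
            fun x => hfun_add_ip_sub_le v t x w
  have hab' : (a : ℝ) + b = 1 := by exact_mod_cast hab
  rw [integral_shiftMixture hpos hpos_shift, NNReal.smul_def, NNReal.smul_def, smul_eq_mul,
    smul_eq_mul]
  calc ∫ x, hfun v t x ∂F + b * ip w v - b * ∫ x, hfun (-v) (-t) x ∂F
      = a * ∫ x, hfun v t x ∂F +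
          b * (∫ x, hfun v t x ∂F + ip w v - ∫ x, hfun (-v) (-t) x ∂F) := by
        linear_combination -(∫ x, hfun v t x ∂F) * hab'
    _ ≤ a * ∫ x, hfun v t x ∂F + b * ∫ x, hfun v t (x + w) ∂F := by gcongr

lemma exists_mem_wassersteinBall_le_integral_hfun [p.HolderConjugate q]
    (hF : Integrable (fun x => x) F) {ε : ℝ} (hε : 0 ≤ ε) {b : ℝ} (hb : b ∈ Set.Ioc 0 1) :
    ∃ μ ∈ wassersteinBall p F ε, ∫ x, hfun v t x ∂F + ε * lpNorm q v -
      b * ∫ x, hfun (-v) (-t) x ∂F ≤ ∫ x, hfun v t x ∂μ := by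
  have : Fact (1 ≤ p) := ⟨ENNReal.HolderConjugate.one_le p q⟩
  obtain ⟨u, hu, huv⟩ := exists_lpNorm_le_one_ip_eq (p := p) (q := q) v
  lift b to ℝ≥0 using hb.1.le
  have hab : 1 - b + b = 1 := tsub_add_cancel_of_le (by exact_mod_cast hb.2)
  have hbε : b * (ε / b) = ε := mul_div_cancel₀ ε hb.1.ne'
  have hnorm : b * lpNorm p ((ε / b) • u) ≤ ε := by
    rw [lpNorm_eq_norm_toLp] at hu ⊢
    rw [WithLp.toLp_smul, norm_smul, Real.norm_of_nonneg (by positivity), ← mul_assoc, hbε]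
    exact mul_le_of_le_one_right hε hu
  have hip : b * ip ((ε / b) • u) v = ε * lpNorm q v := by
    rw [ip_eq_dotProduct, smul_dotProduct, smul_eq_mul, ← mul_assoc, hbε, ← huv,
      ip_eq_dotProduct]
  refine ⟨_, shiftMixture_mem_wassersteinBall hF hab hnorm, ?_⟩
  rw [← hip]
  exact le_integral_hfun_shiftMixture v t hF hab _

theorem isLUB_integral_hfun_wassersteinBall [p.HolderConjugate q]
    (hF : Integrable (fun x => x) F) {ε : ℝ} (hε : 0 ≤ ε) :
    IsLUB {r | ∃ μ ∈ wassersteinBall p F ε, r = ∫ x, hfun v t x ∂μ}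
      (∫ x, hfun v t x ∂F + ε * lpNorm q v) := by
  have : Fact (1 ≤ p) := ⟨ENNReal.HolderConjugate.one_le p q⟩
  have : Fact (1 ≤ q) := ⟨ENNReal.HolderConjugate.one_le q p⟩
  constructor
  · rintro _ ⟨μ, ⟨_, hμ, hdW⟩, rfl⟩
    rw [mul_comm ε]
    exact integral_le_add_mul_of_dW_le (by simp only [lpNorm_eq_norm_toLp, norm_nonneg]) hε
      (hfun_le_add_lpNorm_mul v t) (integrable_hfun v t hF)
      (integrable_hfun v t (integrable_lpNorm_iff.1 hμ)) hdW
  · intro B hB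
    set S := ∫ x, hfun v t x ∂F + ε * lpNorm q v
    set D := ∫ x, hfun (-v) (-t) x ∂F
    have hle : ∀ᶠ b in 𝓝[>] (0 : ℝ), S - b * D ≤ B := by
      filter_upwards [Ioc_mem_nhdsGT zero_lt_one] with b hb
      obtain ⟨μ, hμ, hbμ⟩ :=
        exists_mem_wassersteinBall_le_integral_hfun (p := p) (q := q) v t hF hε hb
      exact hbμ.trans (hB ⟨μ, hμ, rfl⟩)
    have hlim : Tendsto (fun b => S - b * D) (𝓝[>] 0) (𝓝 (S - 0 * D)) :=
      (by fun_prop : Continuous fun b => S - b * D).continuousWithinAt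
    rw [zero_mul, sub_zero] at hlim
    exact le_of_tendsto hlim hle

end WorstCase

lemma isLeast_dualProgram {Ω : Type*} [MeasurableSpace Ω] {P : Measure Ω} {g : Ω → ℝ}
    (hg : Integrable g P) (c : ℝ) {ε : ℝ} (hε : 0 ≤ ε) :
    IsLeast {y | ∃ (s : Ω → ℝ) (lam : ℝ), Integrable s P ∧ (∀ ω, g ω ≤ s ω ∧ 0 ≤ s ω) ∧
      c ≤ lam ∧ y = ∫ ω, s ω ∂P + lam * ε} (∫ ω, max (g ω) 0 ∂P + ε * c) := by
  constructor
  · exact ⟨fun ω => max (g ω) 0, c, hg.pos_part, fun ω => ⟨le_max_left _ _, le_max_right _ _⟩,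
      le_rfl, by rw [mul_comm]⟩
  · rintro _ ⟨s, lam, hs, hgs, hc, rfl⟩
    rw [mul_comm ε]
    exact add_le_add (integral_mono hg.pos_part hs fun ω => max_le (hgs ω).1 (hgs ω).2)
      (mul_le_mul_of_nonneg_right hc hε)

theorem stmt6_general {Ω : Type*} [MeasurableSpace Ω] (P : Measure Ω) [IsProbabilityMeasure P]
    {n : ℕ} {p q : ℝ≥0∞} (hpq : 1 / p + 1 / q = 1) (v : Fin n → ℝ) (t : ℝ) {ε : ℝ} (hε : 0 ≤ ε)
    {ξ : Ω → Fin n → ℝ} (hξ : Integrable ξ P) :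
    sSup {r : ℝ | ∃ μ ∈ wassersteinBall p (P.map ξ) ε, r = ∫ x, hfun v t x ∂μ} =
      sInf {y : ℝ | ∃ (s : Ω → ℝ) (lam : ℝ), Integrable s P ∧
        (∀ ω, ip v (ξ ω) - t ≤ s ω ∧ 0 ≤ s ω) ∧ lpNorm q v ≤ lam ∧
        y = ∫ ω, s ω ∂P + lam * ε} ∧
    sSup {r : ℝ | ∃ μ ∈ wassersteinBall p (P.map ξ) ε, r = ∫ x, hfun v t x ∂μ} =
      ∫ ω, max (ip v (ξ ω) - t) 0 ∂P + ε * lpNorm q v := by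
  have : p.HolderConjugate q := ENNReal.holderConjugate_iff.2 (by simpa using hpq)
  have : IsProbabilityMeasure (P.map ξ) := Measure.isProbabilityMeasure_map hξ.1.aemeasurable
  have hF : Integrable (fun x => x) (P.map ξ) :=
    (integrable_map_measure aestronglyMeasurable_id hξ.1.aemeasurable).2 hξ
  have hip : Integrable (fun ω => ip v (ξ ω) - t) P :=
    (integrable_finsetSum _ fun i _ => (hξ.eval i).const_mul (v i)).sub (integrable_const t)
  have hmap : ∫ x, hfun v t x ∂P.map ξ = ∫ ω, max (ip v (ξ ω) - t) 0 ∂P := by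
    rw [integral_map hξ.1.aemeasurable (integrable_hfun v t hF).1]
    simp only [hfun, ip_eq_dotProduct, dotProduct_comm]
  have hsup := isLUB_integral_hfun_wassersteinBall (p := p) (q := q) v t hF hε
  obtain ⟨μ, hμ, -⟩ := exists_mem_wassersteinBall_le_integral_hfun (p := p) (q := q) v t hF hε
    (Set.right_mem_Ioc.2 zero_lt_one)
  rw [hsup.csSup_eq ⟨_, μ, hμ, rfl⟩, hmap,
    (isLeast_dualProgram hip (lpNorm q v) hε).csInf_eq]
  exact ⟨rfl, rfl⟩

lemma map_uniformOn_univ {N n : ℕ} (ξ : Fin N → Fin n → ℝ) :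
    (ProbabilityTheory.uniformOn Set.univ).map ξ = empirical N ξ := by
  have hξ : Measurable ξ := .of_discrete
  simp [empirical, ProbabilityTheory.uniformOn, ProbabilityTheory.cond, Measure.count,
    Measure.map_smul, Measure.sum_fintype, Measure.map_finset_sum' hξ.aemeasurable,
    Measure.map_dirac' hξ]

lemma integral_uniformOn_univ {N : ℕ} (s : Fin N → ℝ) :
    ∫ i, s i ∂ProbabilityTheory.uniformOn Set.univ = (1 / (N : ℝ)) * ∑ i, s i := by
  simp [ProbabilityTheory.uniformOn, ProbabilityTheory.cond]

/-- Theorem 1, inner worst-case expectation: the supremum of `∫ h(v,t,·) dμ`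
over probability measures with finite first moment in the Wasserstein ball of radius `ε`
around `F_N` equals the optimal value of the dual LP, i.e.
`(1/N)Σ max(⟨v,ξ̂ⁱ⟩ − t, 0) + ε‖v‖_q`. -/
theorem stmt6 (n : ℕ) (hn : 1 ≤ n) (p q : ℝ≥0∞) (hp : 1 ≤ p) (hpq : 1 / p + 1 / q = 1)
    (v : Fin n → ℝ) (t ε : ℝ) (hε : 0 ≤ ε)
    (N : ℕ) (hN : 1 ≤ N) (ξ : Fin N → Fin n → ℝ) :
    sSup {r : ℝ | ∃ μ : Measure (Fin n → ℝ), IsProbabilityMeasure μ ∧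
        Integrable (fun x => lpNorm p x) μ ∧
        dW p (empirical N ξ) μ ≤ ENNReal.ofReal ε ∧ r = ∫ x, hfun v t x ∂μ} =
      sInf {y : ℝ | ∃ (s : Fin N → ℝ) (lam : ℝ),
        (∀ i, ip v (ξ i) - t ≤ s i ∧ 0 ≤ s i) ∧ lpNorm q v ≤ lam ∧
        y = (1 / (N : ℝ)) * ∑ i, s i + lam * ε} ∧
    sSup {r : ℝ | ∃ μ : Measure (Fin n → ℝ), IsProbabilityMeasure μ ∧
        Integrable (fun x => lpNorm p x) μ ∧
        dW p (empirical N ξ) μ ≤ ENNReal.ofReal ε ∧ r = ∫ x, hfun v t x ∂μ} =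
      (1 / (N : ℝ)) * ∑ i, max (ip v (ξ i) - t) 0 + ε * lpNorm q v := by
  have : NeZero N := ⟨by omega⟩
  simpa only [wassersteinBall, Set.mem_ofPred_eq, and_assoc, map_uniformOn_univ,
    integral_uniformOn_univ, Integrable.of_finite, true_and] using
    stmt6_general (ProbabilityTheory.uniformOn Set.univ) hpq v t hε (ξ := ξ) .of_finite
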